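/- Let u : ℝ → ℝ be smooth, let L be the operator on smooth functions f : ℝ → ℝ given by (Lf)(x) = f''(x) + u(x)·f(x), and for integers k ≥ n ≥ 1 let P_{k,n}(u, x₀) denote the value at x₀ of L^k applied to x ↦ (x − x₀)^(2k−2n). Define G_n(u, x₀) = Σ_{m=n}^{2n} Σ_{k=n}^{m} [ (−1)^(n+k) · C(m,k) · C(m,n) · C(2m,m) / ( 2^(2m−2n+1) · C(2m,2n) · (2k−2n)! ) ] · P_{k,n}(u, x₀). Then for every x₀ ∈ ℝ, G_3(u, x₀) = u''''(x₀) + 10·u(x₀)·u''(x₀) + 5·(u'(x₀))² + 10·u(x₀)³. -/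

import Mathlib

open Finset

/-- `P_{k,n}(u, x₀) := (L^k [(· − x₀)^(2k−2n)])(x₀)`, where `L = d²/dx² + u`. -/
noncomputable def Pkn (u : ℝ → ℝ) (k n : ℕ) (x₀ : ℝ) : ℝ :=
  ((fun f : ℝ → ℝ => fun x => iteratedDeriv 2 f x + u x * f x)^[k]
      (fun x => (x - x₀) ^ (2 * k - 2 * n))) x₀

/-- The `n`-th KdV hierarchy polynomial evaluated at `u` and its derivatives at `x₀`,
as given by the closed formula of Theorem 1:
`G_n(u, x₀) = Σ_{m=n}^{2n} Σ_{k=n}^{m} (−1)^(n+k) C(m,k) C(m,n) C(2m,m) /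
(2^(2m−2n+1) C(2m,2n) (2k−2n)!) · P_{k,n}(u, x₀)`. -/
noncomputable def kdvG (u : ℝ → ℝ) (n : ℕ) (x₀ : ℝ) : ℝ :=
  ∑ m ∈ Finset.Icc n (2 * n), ∑ k ∈ Finset.Icc n m,
    ((-1 : ℝ) ^ (n + k) * (m.choose k : ℝ) * (m.choose n : ℝ) *
        ((2 * m).choose m : ℝ)) /
      (2 ^ (2 * m - 2 * n + 1) * ((2 * m).choose (2 * n) : ℝ) *
        ((2 * k - 2 * n).factorial : ℝ)) * Pkn u k n x₀

/-!
Moving all derivatives in `(D² + u)^k` to the right by the Leibniz rule gives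
`(D² + u)^k = ∑ w, g_w(k) D^(2k-w)`, where the `g_w(k)` are polynomials in the derivatives of `u`.
Since `D^j (x - x₀)^N` vanishes at `x₀` unless `j = N`, only the term `w = 2n` contributes to
`P_{k,n}`, so that `P_{k,n} = (2k-2n)! g_{2n}(k)`. This factorial cancels the one in `G_n`, and the
alternating sum over `k` becomes the forward difference `Δ^m g_{2n}` at `0`: thus `G_n` is a
weighted sum of the coefficients of `g_{2n}` in the basis of binomial coefficients `k ↦ C(k, m)`.
For `n = 3` these are found by summing the recursion for `g_w(k + 1) - g_w(k)`.
-/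

section NormalOrdering

variable {R : Type*} [CommSemiring R]

/-- The coefficient of `D^(2k-w)` in the normally ordered form of `(D² + u)^k` at a point where
`v i` is the `i`-th derivative of `u`. It is indexed by the weight `w` (where `D` has weight `1` and
`u^(i)` has weight `i + 2`), which makes it polynomial in `k` for fixed `w`. The recursion comes
from multiplying `(D² + u)^k` by `D² + u` on the right; the subtraction `2 * k - m` truncates only
for `2 * k < m`, where the factor `schrodingerCoeff v k m` is zero. -/
def schrodingerCoeff (v : ℕ → R) : ℕ → ℕ → R
  | 0, 0 => 1
  | 0, _ + 1 => 0
  | k + 1, 0 => schrodingerCoeff v k 0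
  | k + 1, 1 => schrodingerCoeff v k 1
  | k + 1, w + 2 => schrodingerCoeff v k (w + 2) +
      ∑ m ∈ range (w + 1), schrodingerCoeff v k m * (2 * k - m).choose (w - m) * v (w - m)

lemma schrodingerCoeff_weight_zero (v : ℕ → R) (k : ℕ) : schrodingerCoeff v k 0 = 1 := by
  induction k with
  | zero => rfl
  | succ _ ih => exact ih

lemma schrodingerCoeff_weight_one (v : ℕ → R) (k : ℕ) : schrodingerCoeff v k 1 = 0 := by
  induction k with
  | zero => rfl
  | succ _ ih => exact ih

lemma schrodingerCoeff_succ_add_two (v : ℕ → R) (k w : ℕ) :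
    schrodingerCoeff v (k + 1) (w + 2) = schrodingerCoeff v k (w + 2) +
      ∑ m ∈ range (w + 1), schrodingerCoeff v k m * (2 * k - m).choose (w - m) * v (w - m) :=
  rfl

lemma schrodingerCoeff_eq_zero_of_lt (v : ℕ → R) {k w : ℕ} (h : 2 * k < w) :
    schrodingerCoeff v k w = 0 := by
  induction k generalizing w with
  | zero =>
    obtain ⟨w, rfl⟩ := Nat.exists_eq_add_of_lt h
    rfl
  | succ k ih =>
    obtain ⟨w, rfl⟩ : ∃ w', w = w' + 2 := ⟨w - 2, by lia⟩
    rw [schrodingerCoeff_succ_add_two, ih (by lia), zero_add]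
    refine sum_eq_zero fun m _ => ?_
    rcases lt_or_ge (2 * k) m with hm | hm
    · rw [ih hm, zero_mul, zero_mul]
    · rw [Nat.choose_eq_zero_of_lt (by lia), Nat.cast_zero, mul_zero, zero_mul]

lemma sum_range_leibniz_flip (c v a : ℕ → R) (N : ℕ) :
    ∑ w ∈ range (N + 1), (∑ m ∈ range (w + 1), c m * (N - m).choose (w - m) * v (w - m)) *
        a (N - w) =
      ∑ m ∈ range (N + 1), c m * ∑ i ∈ range (N - m + 1),
        ((N - m).choose i : R) * v i * a (N - m - i) := by
  let summand (m i : ℕ) : R := c m * (N - m).choose i * v i * a (N - m - i)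
  calc
    _ = ∑ w ∈ range (N + 1), ∑ m ∈ range (w + 1), summand m (w - m) := by
      refine sum_congr rfl fun w _ => ?_
      rw [sum_mul]
      refine sum_congr rfl fun m hm => ?_
      rw [mem_range] at hm
      simp only [summand, show N - m - (w - m) = N - w by lia]
    _ = ∑ m ∈ range (N + 1), ∑ i ∈ range (N + 1 - m), summand m i := sum_range_diag_flip _ _
    _ = _ := by
      refine sum_congr rfl fun m hm => ?_
      rw [mem_range] at hm
      rw [mul_sum, show N + 1 - m = N - m + 1 by lia]
      exact sum_congr rfl fun i _ => by ring

lemma sum_schrodingerCoeff_succ (v a : ℕ → R) (k : ℕ) :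
    ∑ w ∈ range (2 * (k + 1) + 1), schrodingerCoeff v (k + 1) w * a (2 * (k + 1) - w) =
      ∑ w ∈ range (2 * k + 1), schrodingerCoeff v k w *
        (a (2 * k - w + 2) + ∑ i ∈ range (2 * k - w + 1),
          ((2 * k - w).choose i : R) * v i * a (2 * k - w - i)) := by
  have shift : ∑ w ∈ range (2 * (k + 1) + 1), schrodingerCoeff v k w * a (2 * (k + 1) - w) =
      ∑ w ∈ range (2 * k + 1), schrodingerCoeff v k w * a (2 * k - w + 2) := by
    rw [show 2 * (k + 1) + 1 = 2 * k + 1 + 1 + 1 by ring, sum_range_succ, sum_range_succ,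
      schrodingerCoeff_eq_zero_of_lt v (by lia), schrodingerCoeff_eq_zero_of_lt v (by lia),
      zero_mul, zero_mul, add_zero, add_zero]
    refine sum_congr rfl fun w hw => ?_
    rw [mem_range] at hw
    rw [show 2 * (k + 1) - w = 2 * k - w + 2 by lia]
  simp only [mul_add (schrodingerCoeff v k _), sum_add_distrib]
  rw [← shift, ← sum_range_leibniz_flip]
  simp only [show 2 * (k + 1) + 1 = 2 * k + 1 + 1 + 1 by ring, sum_range_succ' _ (2 * k + 1 + 1),
    sum_range_succ' _ (2 * k + 1), schrodingerCoeff_succ_add_two, add_mul, sum_add_distrib,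
    show ∀ w, 2 * (k + 1) - (w + 1 + 1) = 2 * k - w by lia]
  simp only [zero_add, schrodingerCoeff_weight_zero, schrodingerCoeff_weight_one]
  ring

end NormalOrdering

section SchrodingerOperator

variable {𝕜 : Type*} [NontriviallyNormedField 𝕜]

/-- The one-dimensional Schrödinger operator `L = D² + u` with potential `u`, spelled as in `Pkn` so
that `Pkn` is one of its iterates by definition. -/
noncomputable def schrodinger (u f : 𝕜 → 𝕜) : 𝕜 → 𝕜 :=
  fun x => iteratedDeriv 2 f x + u x * f x

lemma contDiffAt_iteratedDeriv {F : Type*} [NormedAddCommGroup F] [NormedSpace 𝕜 F] {f : 𝕜 → F}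
    {x : 𝕜} {n m : ℕ} (hf : ContDiffAt 𝕜 (n + m : ℕ) f x) :
    ContDiffAt 𝕜 n (iteratedDeriv m f) x := by
  induction m generalizing f with
  | zero => rwa [iteratedDeriv_zero]
  | succ m ih =>
    rw [iteratedDeriv_succ']
    exact ih (hf.derivWithin (by norm_cast))

lemma contDiffAt_schrodinger {u f : 𝕜 → 𝕜} {x : 𝕜} {n : ℕ} (hu : ContDiffAt 𝕜 n u x)
    (hf : ContDiffAt 𝕜 (n + 2 : ℕ) f x) : ContDiffAt 𝕜 n (schrodinger u f) x :=
  (contDiffAt_iteratedDeriv hf).add (hu.mul (hf.of_le (by norm_cast; lia)))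

lemma iteratedDeriv_schrodinger {u f : 𝕜 → 𝕜} {x : 𝕜} {n : ℕ} (hu : ContDiffAt 𝕜 n u x)
    (hf : ContDiffAt 𝕜 (n + 2 : ℕ) f x) :
    iteratedDeriv n (schrodinger u f) x = iteratedDeriv (n + 2) f x +
      ∑ i ∈ range (n + 1), (n.choose i : 𝕜) * iteratedDeriv i u x * iteratedDeriv (n - i) f x := by
  have hf' : ContDiffAt 𝕜 n f x := hf.of_le (by norm_cast; lia)
  have huf : ContDiffAt 𝕜 n (u * f) x := hu.mul hf'
  have deriv_comp : iteratedDeriv n (iteratedDeriv 2 f) = iteratedDeriv (n + 2) f := by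
    simp only [iteratedDeriv_eq_iterate, Function.iterate_add_apply]
  rw [← deriv_comp, ← iteratedDeriv_mul hu hf',
    ← iteratedDeriv_add (contDiffAt_iteratedDeriv hf) huf]
  rfl

lemma iterate_schrodinger_apply {u f : 𝕜 → 𝕜} {x : 𝕜} {k : ℕ}
    (hu : ContDiffAt 𝕜 (2 * k - 2 : ℕ) u x) (hf : ContDiffAt 𝕜 (2 * k : ℕ) f x) :
    (schrodinger u)^[k] f x = ∑ w ∈ range (2 * k + 1),
      schrodingerCoeff (fun i => iteratedDeriv i u x) k w * iteratedDeriv (2 * k - w) f x := by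
  induction k generalizing f with
  | zero => simp [schrodingerCoeff]
  | succ k ih =>
    have hu' : ContDiffAt 𝕜 (2 * k : ℕ) u x := hu
    rw [Function.iterate_succ_apply,
      ih (hu'.of_le (by norm_cast; lia)) (contDiffAt_schrodinger hu' hf),
      sum_schrodingerCoeff_succ _ fun j => iteratedDeriv j f x]
    refine sum_congr rfl fun w _ => ?_
    rw [iteratedDeriv_schrodinger (hu'.of_le (by norm_cast; lia)) (hf.of_le (by norm_cast; lia))]

lemma iteratedDeriv_sub_pow_self (x : 𝕜) (j m : ℕ) :
    iteratedDeriv j (fun y => (y - x) ^ m) x = if j = m then (m.factorial : 𝕜) else 0 := by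
  rw [iteratedDeriv_comp_sub_const (f := fun y : 𝕜 => y ^ m)]
  simp only [sub_self, iteratedDeriv_fun_pow_zero, Nat.cast_ite, Nat.cast_zero]

lemma iterate_schrodinger_sub_pow {u : 𝕜 → 𝕜} {x : 𝕜} {k w : ℕ}
    (hu : ContDiffAt 𝕜 (2 * k - 2 : ℕ) u x) (hw : w ≤ 2 * k) :
    (schrodinger u)^[k] (fun y => (y - x) ^ (2 * k - w)) x =
      (2 * k - w).factorial * schrodingerCoeff (fun i => iteratedDeriv i u x) k w := by
  rw [iterate_schrodinger_apply hu (by fun_prop), sum_eq_single_of_mem w (by simpa using by lia)]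
  · rw [iteratedDeriv_sub_pow_self, if_pos rfl, mul_comm]
  · intro w' hw' hne
    rw [mem_range] at hw'
    rw [iteratedDeriv_sub_pow_self, if_neg (by lia), mul_zero]

end SchrodingerOperator

lemma Pkn_eq_factorial_mul_schrodingerCoeff {u : ℝ → ℝ} {x₀ : ℝ} {k n : ℕ}
    (hu : ContDiffAt ℝ (2 * k - 2 : ℕ) u x₀) (hn : n ≤ k) :
    Pkn u k n x₀ = (2 * k - 2 * n).factorial *
      schrodingerCoeff (fun i => iteratedDeriv i u x₀) k (2 * n) :=
  iterate_schrodinger_sub_pow hu (by lia)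

lemma kdvG_eq_sum_fwdDiff {u : ℝ → ℝ} {x₀ : ℝ} {n : ℕ} (hu : ContDiffAt ℝ (4 * n - 2 : ℕ) u x₀) :
    kdvG u n x₀ = ∑ m ∈ Icc n (2 * n),
      (-1) ^ (n + m) * (m.choose n : ℝ) * ((2 * m).choose m : ℝ) /
        (2 ^ (2 * m - 2 * n + 1) * ((2 * m).choose (2 * n) : ℝ)) *
      (fwdDiff 1)^[m] (fun k => schrodingerCoeff (fun i => iteratedDeriv i u x₀) k (2 * n)) 0 := by
  rw [kdvG]
  refine sum_congr rfl fun m hm => ?_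
  rw [mem_Icc] at hm
  have summand_eq_zero : ∀ k ∈ range (m + 1), k ∉ Icc n m →
      ((-1 : ℤ) ^ (m - k) * (m.choose k : ℤ)) •
        schrodingerCoeff (fun i => iteratedDeriv i u x₀) k (2 * n) = 0 := by
    intro k hk hkn
    rw [mem_range] at hk
    rw [mem_Icc] at hkn
    rw [schrodingerCoeff_eq_zero_of_lt _ (by lia), smul_zero]
  have Icc_subset_range : Icc n m ⊆ range (m + 1) := fun k hk => by
    rw [mem_Icc] at hk
    rw [mem_range]
    lia
  simp only [fwdDiff_iter_eq_sum_shift, smul_eq_mul, mul_one, zero_add]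
  rw [← sum_subset Icc_subset_range summand_eq_zero, mul_sum]
  refine sum_congr rfl fun k hk => ?_
  rw [mem_Icc] at hk
  rw [Pkn_eq_factorial_mul_schrodingerCoeff (hu.of_le (by norm_cast; lia)) hk.1]
  have sign : (-1 : ℝ) ^ (n + m) * (-1) ^ (m - k) = (-1) ^ (n + k) := by
    rw [← pow_add, show n + m + (m - k) = n + k + 2 * (m - k) by lia, pow_add, pow_mul, neg_one_sq,
      one_pow, mul_one]
  have factorial_ne_zero : ((2 * k - 2 * n).factorial : ℝ) ≠ 0 := by positivity
  push_cast [zsmul_eq_mul]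
  rw [← sign]
  field_simp

section ClosedForms

lemma two_mul_choose_two (k : ℕ) : (2 * k).choose 2 = k + 4 * k.choose 2 := by
  induction k with
  | zero => rfl
  | succ k ih =>
    simp only [mul_add_one, Nat.choose_succ_succ', Nat.choose_zero_right, Nat.choose_one_right,
      zero_add] at ih ⊢
    lia

lemma two_mul_choose_three (k : ℕ) :
    (2 * k).choose 3 = 4 * k.choose 2 + 8 * k.choose 3 := by
  induction k with
  | zero => rfl
  | succ k ih =>
    have h₂ := two_mul_choose_two k
    simp only [mul_add_one, Nat.choose_succ_succ', Nat.choose_one_right] at ih h₂ ⊢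
    lia

lemma two_mul_choose_four (k : ℕ) :
    (2 * k).choose 4 = k.choose 2 + 12 * k.choose 3 + 16 * k.choose 4 := by
  induction k with
  | zero => rfl
  | succ k ih =>
    have h₂ := two_mul_choose_two k
    have h₃ := two_mul_choose_three k
    simp only [mul_add_one, Nat.choose_succ_succ', Nat.choose_one_right] at ih h₂ h₃ ⊢
    lia

lemma mul_two_mul_sub_two_choose_two (k : ℕ) :
    k * (2 * k - 2).choose 2 = 2 * k.choose 2 + 12 * k.choose 3 := by
  cases k with
  | zero => rfl
  | succ k =>
    have h₁ := Nat.add_one_mul_choose_eq k 1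
    have h₂ := Nat.add_one_mul_choose_eq k 2
    rw [Nat.choose_one_right] at h₁
    rw [show 2 * (k + 1) - 2 = 2 * k by lia, two_mul_choose_two]
    linear_combination h₁ + 4 * h₂

lemma choose_two_mul_two_mul_sub_three (k : ℕ) :
    k.choose 2 * (2 * k - 3) = k.choose 2 + 6 * k.choose 3 := by
  rcases lt_or_ge k 2 with hk | hk
  · interval_cases k <;> rfl
  · obtain ⟨k, rfl⟩ := Nat.exists_eq_add_of_le' hk
    have h := Nat.choose_succ_right_eq (k + 2) 2
    rw [Nat.add_sub_cancel] at h
    rw [show 2 * (k + 2) - 3 = 2 * k + 1 by lia]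
    linear_combination 2 * h.symm

variable {R : Type*} [CommSemiring R] (v : ℕ → R) (k : ℕ)

lemma schrodingerCoeff_weight_two : schrodingerCoeff v k 2 = k * v 0 := by
  induction k with
  | zero => simp [schrodingerCoeff]
  | succ k ih =>
    simp only [schrodingerCoeff_succ_add_two v k 0, ih, zero_add, sum_range_one,
      schrodingerCoeff_weight_zero, Nat.choose_zero_right, Nat.sub_self]
    push_cast
    ring

lemma schrodingerCoeff_weight_three :
    schrodingerCoeff v k 3 = 2 * k.choose 2 * v 1 := by
  induction k with
  | zero => simp [schrodingerCoeff]
  | succ k ih =>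
    simp only [schrodingerCoeff_succ_add_two v k 1, ih, sum_range_succ, sum_range_zero,
      schrodingerCoeff_weight_zero, schrodingerCoeff_weight_one, Nat.choose_one_right,
      Nat.choose_succ_succ' k 1, Nat.sub_zero]
    push_cast
    ring

lemma schrodingerCoeff_weight_four :
    schrodingerCoeff v k 4 = k.choose 2 * v 0 ^ 2 + (k.choose 2 + 4 * k.choose 3) * v 2 := by
  induction k with
  | zero => simp [schrodingerCoeff]
  | succ k ih =>
    simp only [schrodingerCoeff_succ_add_two v k 2, ih, sum_range_succ, sum_range_zero,
      schrodingerCoeff_weight_zero, schrodingerCoeff_weight_one, schrodingerCoeff_weight_two,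
      two_mul_choose_two, Nat.choose_zero_right, Nat.choose_one_right, Nat.sub_zero, Nat.sub_self,
      Nat.choose_succ_succ' k]
    push_cast
    ring

lemma schrodingerCoeff_weight_six :
    schrodingerCoeff v k 6 =
      (v 4 + 3 * v 0 * v 2 + 2 * v 1 ^ 2 + v 0 ^ 3) * k.choose 3 +
        (12 * v 4 + 16 * v 0 * v 2 + 12 * v 1 ^ 2) * k.choose 4 + 16 * v 4 * k.choose 5 := by
  induction k with
  | zero => simp [schrodingerCoeff]
  | succ k ih =>
    have uu'' : (k : R) * (2 * k - 2).choose 2 = 2 * k.choose 2 + 12 * k.choose 3 :=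
      mod_cast congrArg (Nat.cast : ℕ → R) (mul_two_mul_sub_two_choose_two k)
    have u'u' : (k.choose 2 : R) * (2 * k - 3 : ℕ) = k.choose 2 + 6 * k.choose 3 :=
      mod_cast congrArg (Nat.cast : ℕ → R) (choose_two_mul_two_mul_sub_three k)
    calc schrodingerCoeff v (k + 1) 6
      _ = schrodingerCoeff v k 6 + (((2 * k).choose 4 : ℕ) * v 4 +
            ((k : R) * (2 * k - 2).choose 2) * v 0 * v 2 +
            2 * ((k.choose 2 : R) * (2 * k - 3 : ℕ)) * v 1 ^ 2 +
            (k.choose 2 * v 0 ^ 2 + (k.choose 2 + 4 * k.choose 3) * v 2) * v 0) := by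
        simp only [schrodingerCoeff_succ_add_two v k 4, sum_range_succ, sum_range_zero,
          schrodingerCoeff_weight_zero, schrodingerCoeff_weight_one, schrodingerCoeff_weight_two,
          schrodingerCoeff_weight_three, schrodingerCoeff_weight_four, Nat.choose_zero_right,
          Nat.choose_one_right, Nat.sub_zero, Nat.sub_self, Nat.reduceSub]
        push_cast
        ring
      _ = _ := by
        rw [ih, uu'', u'u', two_mul_choose_four]
        simp only [Nat.choose_succ_succ' k]
        push_cast
        ring

end ClosedForms

section NewtonCoefficients

variable {R : Type*} [CommRing R]

lemma fwdDiff_iter_mul_choose_zero (a : R) (j m : ℕ) :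
    (fwdDiff 1)^[m] (fun k : ℕ => a * (k.choose j : R)) 0 = if m = j then a else 0 := by
  have choose_sum := congrArg (Int.cast : ℤ → R) (fwdDiff_iter_choose_zero j m)
  rw [fwdDiff_iter_eq_sum_shift] at choose_sum ⊢
  push_cast [zsmul_eq_mul, smul_eq_mul] at choose_sum ⊢
  simp only [mul_left_comm _ a, ← mul_sum, choose_sum]
  simp only [mul_ite, mul_one, mul_zero]

lemma fwdDiff_iter_schrodingerCoeff_six (v : ℕ → R) (m : ℕ) :
    (fwdDiff 1)^[m] (fun k => schrodingerCoeff v k 6) 0 =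
      (if m = 3 then v 4 + 3 * v 0 * v 2 + 2 * v 1 ^ 2 + v 0 ^ 3 else 0) +
        (if m = 4 then 12 * v 4 + 16 * v 0 * v 2 + 12 * v 1 ^ 2 else 0) +
        if m = 5 then 16 * v 4 else 0 := by
  simp only [← fwdDiff_iter_mul_choose_zero]
  rw [← Pi.add_apply, ← Pi.add_apply, ← fwdDiff_iter_add, ← fwdDiff_iter_add]
  exact congrArg (fun g => (fwdDiff 1)^[m] g 0) (funext (schrodingerCoeff_weight_six v))

end NewtonCoefficients

theorem kdvG_three_general (u : ℝ → ℝ) (x₀ : ℝ) (hu : ContDiffAt ℝ 10 u x₀) :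
    kdvG u 3 x₀ = iteratedDeriv 4 u x₀ + 10 * u x₀ * iteratedDeriv 2 u x₀ +
      5 * (deriv u x₀) ^ 2 + 10 * u x₀ ^ 3 := by
  calc kdvG u 3 x₀
    _ = 10 * (iteratedDeriv 4 u x₀ + 3 * u x₀ * iteratedDeriv 2 u x₀ + 2 * deriv u x₀ ^ 2 +
            u x₀ ^ 3) -
          5 / 4 * (12 * iteratedDeriv 4 u x₀ + 16 * u x₀ * iteratedDeriv 2 u x₀ +
            12 * deriv u x₀ ^ 2) +
          3 / 8 * (16 * iteratedDeriv 4 u x₀) := by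
      rw [kdvG_eq_sum_fwdDiff hu, show Icc 3 (2 * 3) = {3, 4, 5, 6} by rfl]
      simp only [Nat.reduceMul, fwdDiff_iter_schrodingerCoeff_six, iteratedDeriv_zero,
        iteratedDeriv_one]
      norm_num [Nat.choose]
      ring
    _ = _ := by ring

/-- The third KdV polynomial: `G_3[u] = u'''' + 10 u u'' + 5 (u')² + 10 u³`. -/
theorem kdvG_three (u : ℝ → ℝ) (hu : ContDiff ℝ (⊤ : ℕ∞) u) (x₀ : ℝ) :
    kdvG u 3 x₀ = iteratedDeriv 4 u x₀ + 10 * u x₀ * iteratedDeriv 2 u x₀ +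
      5 * (deriv u x₀) ^ 2 + 10 * u x₀ ^ 3 :=
  kdvG_three_general u x₀ (contDiff_infty.1 hu 10).contDiffAt
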